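/- arXiv:2505.15972 — 4 statements merged into one kernel-verified Lean document; each statement's English description precedes it below -/
import Mathlib

section
/- Let D > 0, K̄ ∈ ℝ, and a, b, d > 0. There exist constants ρ, ρ̄ > 0, depending only on D, K̄, a, b, d, with the following property: for every ϑ ∈ ℝ and every continuously differentiable u : [0,D] → ℝ, setting w(x) = u(x) − K̄ ∫₀ˣ (x − r) u(r) dr − K̄ ϑ, one has ρ·Ψ ≤ Υ ≤ ρ̄·Ψ, where Ψ = ϑ² + ‖u‖² + ‖u'‖² + u(D)² and Υ = ϑ²/2 + (a/2)‖w‖² + (b/2)‖w'‖² + (d/2)w(D)². -/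
open Real Set

lemma aux_cs (h : ℝ → ℝ) (hh : Continuous h) (x : ℝ) (hx : 0 ≤ x) :
    (∫ r in (0:ℝ)..x, h r) ^ 2 ≤ x * ∫ r in (0:ℝ)..x, (h r) ^ 2 := by
  rcases hx.eq_or_lt with rfl | hx
  · simp
  set I := ∫ r in (0:ℝ)..x, h r with hI
  have h0 : 0 ≤ ∫ r in (0:ℝ)..x, (x * h r - I) ^ 2 :=
    intervalIntegral.integral_nonneg hx.le fun r _ => sq_nonneg _
  have h1 : ∫ r in (0:ℝ)..x, (x * h r - I) ^ 2
      = ∫ r in (0:ℝ)..x, (x ^ 2 * (h r) ^ 2 - (2 * x * I) * h r + I ^ 2) :=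
    intervalIntegral.integral_congr fun r _ => by ring
  have i1 : IntervalIntegrable (fun r => x ^ 2 * (h r) ^ 2) MeasureTheory.volume 0 x :=
    Continuous.intervalIntegrable (by fun_prop) _ _
  have i2 : IntervalIntegrable (fun r => (2 * x * I) * h r) MeasureTheory.volume 0 x :=
    Continuous.intervalIntegrable (by fun_prop) _ _
  rw [h1, intervalIntegral.integral_add (i1.sub i2) (by simp),
    intervalIntegral.integral_sub i1 i2, intervalIntegral.integral_const_mul,
    intervalIntegral.integral_const_mul, intervalIntegral.integral_const, ← hI] at h0
  simp only [smul_eq_mul, sub_zero] at h0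
  have h2 : 0 ≤ x * (x * (∫ r in (0:ℝ)..x, (h r) ^ 2) - I ^ 2) := by linarith
  have := nonneg_of_mul_nonneg_right h2 hx
  linarith

lemma aux_cs2 (f u : ℝ → ℝ) (hf : Continuous f) (hu : Continuous u) (x M D : ℝ) (hx : 0 ≤ x)
    (hxD : x ≤ D) (hM : ∀ r ∈ Icc 0 x, (f r) ^ 2 ≤ M) (hM0 : 0 ≤ M) :
    (∫ r in (0:ℝ)..x, f r * u r) ^ 2 ≤ D * M * ∫ r in (0:ℝ)..x, (u r) ^ 2 := by
  have h1 := aux_cs (fun r => f r * u r) (hf.mul hu) x hx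
  have h2 : ∫ r in (0:ℝ)..x, (f r * u r) ^ 2 ≤ ∫ r in (0:ℝ)..x, M * (u r) ^ 2 := by
    refine intervalIntegral.integral_mono_on hx
      (Continuous.intervalIntegrable (by fun_prop) _ _)
      (Continuous.intervalIntegrable (by fun_prop) _ _) fun r hr => ?_
    rw [mul_pow]
    exact mul_le_mul_of_nonneg_right (hM r hr) (sq_nonneg _)
  rw [intervalIntegral.integral_const_mul] at h2
  have h3 : 0 ≤ ∫ r in (0:ℝ)..x, (u r) ^ 2 :=
    intervalIntegral.integral_nonneg hx fun r _ => sq_nonneg _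
  calc _ ≤ x * ∫ r in (0:ℝ)..x, (f r * u r) ^ 2 := h1
    _ ≤ x * (M * ∫ r in (0:ℝ)..x, (u r) ^ 2) := mul_le_mul_of_nonneg_left h2 hx
    _ ≤ D * (M * ∫ r in (0:ℝ)..x, (u r) ^ 2) :=
      mul_le_mul_of_nonneg_right hxD (mul_nonneg hM0 h3)
    _ = _ := by ring

lemma aux_gronwall (u g : ℝ → ℝ) (hu : Continuous u) (hg : Continuous g) (c D : ℝ) (hc : 0 ≤ c)
    (hD : 0 < D) (hg0 : ∀ x, 0 ≤ g x)
    (h : ∀ x ∈ Ioo 0 D, (u x) ^ 2 ≤ g x + c * ∫ r in (0:ℝ)..x, (u r) ^ 2) :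
    ∫ r in (0:ℝ)..D, (u r) ^ 2 ≤ exp (c * D) * ∫ r in (0:ℝ)..D, g r := by
  have dE : ∀ x, HasDerivAt (fun y => ∫ r in (0:ℝ)..y, (u r) ^ 2) ((u x) ^ 2) x := fun x =>
    (hu.pow 2).integral_hasStrictDerivAt 0 x |>.hasDerivAt
  have dG : ∀ x, HasDerivAt (fun y => ∫ r in (0:ℝ)..y, g r) (g x) x := fun x =>
    hg.integral_hasStrictDerivAt 0 x |>.hasDerivAt
  have de : ∀ x, HasDerivAt (fun y => exp (-(c * y))) (exp (-(c * x)) * (-c)) x := fun x => by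
    simpa using (((hasDerivAt_id x).const_mul c).neg).exp
  have dF := fun x => (dG x).sub ((de x).mul (dE x))
  have mono := monotoneOn_of_deriv_nonneg (convex_Icc 0 D)
    (fun x _ => (dF x).continuousAt.continuousWithinAt)
    (fun x _ => (dF x).differentiableAt.differentiableWithinAt) (by
      intro x hx
      rw [interior_Icc] at hx
      rw [(dF x).deriv]
      have e1 : exp (-(c * x)) ≤ 1 := by
        rw [exp_le_one_iff]; have := mul_nonneg hc hx.1.le; linarith
      have e0 := exp_pos (-(c * x))
      have := mul_le_mul_of_nonneg_left (h x hx) e0.le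
      have := mul_le_mul_of_nonneg_right e1 (hg0 x)
      linarith)
  have := mono (left_mem_Icc.2 hD.le) (right_mem_Icc.2 hD.le) hD.le
  simp at this
  have h3 := mul_le_mul_of_nonneg_left this (exp_pos (c * D)).le
  rw [← mul_assoc, ← exp_add] at h3
  simpa using h3

/-- all estimates for globally continuous data -/
lemma aux_core (D K : ℝ) (hD : 0 < D) (t : ℝ) (u g w w' : ℝ → ℝ) (hu : Continuous u)
    (hg : Continuous g) (hwc : Continuous w) (hwc' : Continuous w')
    (hw : ∀ x, w x = u x - K * (∫ r in (0:ℝ)..x, (x - r) * u r) - K * t)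
    (hw' : ∀ x, w' x = g x - K * ∫ r in (0:ℝ)..x, u r) :
    (∫ x in (0:ℝ)..D, (w x) ^ 2) ≤ 3 * ((∫ x in (0:ℝ)..D, (u x) ^ 2)
      + D * (K ^ 2 * D ^ 3 * (∫ x in (0:ℝ)..D, (u x) ^ 2)) + D * (K ^ 2 * t ^ 2)) ∧
    (∫ x in (0:ℝ)..D, (w' x) ^ 2) ≤ 2 * ((∫ x in (0:ℝ)..D, (g x) ^ 2)
      + D * (K ^ 2 * D * (∫ x in (0:ℝ)..D, (u x) ^ 2))) ∧
    (w D) ^ 2 ≤ 3 * ((u D) ^ 2 + K ^ 2 * D ^ 3 * (∫ x in (0:ℝ)..D, (u x) ^ 2) + K ^ 2 * t ^ 2) ∧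
    (∫ x in (0:ℝ)..D, (u x) ^ 2) ≤ exp (3 * K ^ 2 * D ^ 3 * D) * (3 * (∫ x in (0:ℝ)..D, (w x) ^ 2)
      + D * (3 * (K ^ 2 * t ^ 2))) ∧
    (∫ x in (0:ℝ)..D, (g x) ^ 2) ≤ 2 * ((∫ x in (0:ℝ)..D, (w' x) ^ 2)
      + D * (K ^ 2 * D * (∫ x in (0:ℝ)..D, (u x) ^ 2))) ∧
    (u D) ^ 2 ≤ 3 * ((w D) ^ 2 + K ^ 2 * D ^ 3 * (∫ x in (0:ℝ)..D, (u x) ^ 2) + K ^ 2 * t ^ 2) := by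
  have two : ∀ p q : ℝ, (p + q) ^ 2 ≤ 2 * (p ^ 2 + q ^ 2) := fun p q => by
    nlinarith [sq_nonneg (p - q)]
  have three : ∀ p q r : ℝ, (p + q + r) ^ 2 ≤ 3 * (p ^ 2 + q ^ 2 + r ^ 2) := fun p q r => by
    nlinarith [sq_nonneg (p - q), sq_nonneg (p - r), sq_nonneg (q - r)]
  have V : ∀ x ∈ Icc 0 D, (∫ r in (0:ℝ)..x, (x - r) * u r) ^ 2
      ≤ D ^ 3 * ∫ r in (0:ℝ)..x, (u r) ^ 2 := fun x hx => by
    have := aux_cs2 (fun r => x - r) u (by fun_prop) hu x (D ^ 2) D hx.1 hx.2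
      (fun r hr => by
        have h1 := hr.1; have h2 := hr.2; have h3 := hx.2
        exact pow_le_pow_left₀ (by linarith) (by linarith) 2) (by positivity)
    calc _ ≤ _ := this
      _ = _ := by ring
  have U : ∀ x ∈ Icc 0 D, (∫ r in (0:ℝ)..x, u r) ^ 2
      ≤ D * ∫ r in (0:ℝ)..x, (u r) ^ 2 := fun x hx => by
    have := aux_cs2 (fun r => 1) u (by fun_prop) hu x 1 D hx.1 hx.2 (by simp) (by simp)
    simpa using this
  have E : ∀ x ∈ Icc 0 D, ∫ r in (0:ℝ)..x, (u r) ^ 2 ≤ ∫ r in (0:ℝ)..D, (u r) ^ 2 := fun x hx =>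
    intervalIntegral.integral_mono_interval le_rfl hx.1 hx.2
      (Filter.Eventually.of_forall fun r => sq_nonneg _)
      (Continuous.intervalIntegrable (by fun_prop) _ _)
  have DD : D ∈ Icc 0 D := right_mem_Icc.2 hD.le
  set N := ∫ r in (0:ℝ)..D, (u r) ^ 2 with hN
  have KV : ∀ x ∈ Icc 0 D, (K * ∫ r in (0:ℝ)..x, (x - r) * u r) ^ 2 ≤ K ^ 2 * D ^ 3 * N := by
    intro x hx
    rw [mul_pow, mul_assoc]
    exact mul_le_mul_of_nonneg_left ((V x hx).trans
      (mul_le_mul_of_nonneg_left (E x hx) (by positivity))) (by positivity)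
  have KU : ∀ x ∈ Icc 0 D, (K * ∫ r in (0:ℝ)..x, u r) ^ 2 ≤ K ^ 2 * D * N := by
    intro x hx
    rw [mul_pow, mul_assoc]
    exact mul_le_mul_of_nonneg_left ((U x hx).trans
      (mul_le_mul_of_nonneg_left (E x hx) (by positivity))) (by positivity)
  have w1 : ∀ x ∈ Icc 0 D, (w x) ^ 2 ≤ 3 * ((u x) ^ 2 + K ^ 2 * D ^ 3 * N + K ^ 2 * t ^ 2) := by
    intro x hx
    have := three (u x) (-(K * ∫ r in (0:ℝ)..x, (x - r) * u r)) (-(K * t))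
    rw [neg_sq, neg_sq, mul_pow K t] at this
    rw [hw x, sub_eq_add_neg, sub_eq_add_neg]
    linarith [KV x hx]
  have u1 : ∀ x, (u x) ^ 2 ≤ 3 * ((w x) ^ 2 + (K * ∫ r in (0:ℝ)..x, (x - r) * u r) ^ 2
      + K ^ 2 * t ^ 2) := by
    intro x
    have := three (w x) (K * ∫ r in (0:ℝ)..x, (x - r) * u r) (K * t)
    rw [mul_pow K t] at this
    have e : u x = w x + (K * ∫ r in (0:ℝ)..x, (x - r) * u r) + K * t := by rw [hw x]; ring
    rw [← e] at this
    exact this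
  have w2 : ∀ x ∈ Icc 0 D, (w' x) ^ 2 ≤ 2 * ((g x) ^ 2 + K ^ 2 * D * N) := by
    intro x hx
    have := two (g x) (-(K * ∫ r in (0:ℝ)..x, u r))
    rw [neg_sq] at this
    rw [hw' x, sub_eq_add_neg]
    linarith [KU x hx]
  have g2 : ∀ x ∈ Icc 0 D, (g x) ^ 2 ≤ 2 * ((w' x) ^ 2 + K ^ 2 * D * N) := by
    intro x hx
    have := two (w' x) (K * ∫ r in (0:ℝ)..x, u r)
    have e : w' x + (K * ∫ r in (0:ℝ)..x, u r) = g x := by rw [hw' x]; ring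
    rw [e] at this
    linarith [KU x hx]
  have int : ∀ (p q : ℝ → ℝ) (c C : ℝ), Continuous p → Continuous q →
      (∀ x ∈ Icc 0 D, (p x) ^ 2 ≤ c * (q x) ^ 2 + C) →
      ∫ x in (0:ℝ)..D, (p x) ^ 2 ≤ c * (∫ x in (0:ℝ)..D, (q x) ^ 2) + D * C := by
    intro p q c C hp hq h
    have := intervalIntegral.integral_mono_on (μ := MeasureTheory.volume) hD.le
      (Continuous.intervalIntegrable (by fun_prop) _ _)
      (Continuous.intervalIntegrable (by fun_prop) _ _) h
    rw [intervalIntegral.integral_add (Continuous.intervalIntegrable (by fun_prop) _ _)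
      (by simp), intervalIntegral.integral_const_mul, intervalIntegral.integral_const] at this
    simpa using this
  refine ⟨?_, ?_, ?_, ?_, ?_, ?_⟩
  · have := int w u 3 (3 * (K ^ 2 * D ^ 3 * N + K ^ 2 * t ^ 2)) hwc hu
      (fun x hx => by linarith [w1 x hx])
    linarith
  · have := int w' g 2 (2 * (K ^ 2 * D * N)) hwc' hg (fun x hx => by linarith [w2 x hx])
    linarith
  · exact w1 D DD
  · have := aux_gronwall u (fun x => 3 * (w x) ^ 2 + 3 * (K ^ 2 * t ^ 2)) hu (by fun_prop)
      (3 * K ^ 2 * D ^ 3) D (by positivity) hD (fun x => by positivity) (fun x hx => by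
        have h1 := u1 x
        have h2 := mul_le_mul_of_nonneg_left (V x (Ioo_subset_Icc_self hx)) (sq_nonneg K)
        rw [mul_pow] at h1
        linarith)
    rw [intervalIntegral.integral_add (Continuous.intervalIntegrable (by fun_prop) _ _)
      (by simp), intervalIntegral.integral_const_mul, intervalIntegral.integral_const] at this
    simpa using this
  · have := int g w' 2 (2 * (K ^ 2 * D * N)) hg hwc' (fun x hx => by linarith [g2 x hx])
    linarith
  · linarith [u1 D, KV D DD]

lemma aux_congr (D : ℝ) (hD : 0 < D) (p q : ℝ → ℝ) (h : ∀ x ∈ Ioo 0 D, p x = q x) :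
    ∫ x in (0:ℝ)..D, (p x) ^ 2 = ∫ x in (0:ℝ)..D, (q x) ^ 2 := by
  rw [intervalIntegral.integral_of_le hD.le, intervalIntegral.integral_of_le hD.le,
    MeasureTheory.integral_Ioc_eq_integral_Ioo, MeasureTheory.integral_Ioc_eq_integral_Ioo]
  exact MeasureTheory.setIntegral_congr_fun measurableSet_Ioo fun x hx => by simp only [h x hx]

/-- Reduction to globally continuous data. -/
lemma aux_red (D K : ℝ) (hD : 0 < D) (t : ℝ) (u w : ℝ → ℝ) (hu : ContDiffOn ℝ 1 u (Icc 0 D))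
    (hw : ∀ x, w x = u x - K * (∫ r in (0:ℝ)..x, (x - r) * u r) - K * t) :
    ∃ v g z z' : ℝ → ℝ, Continuous v ∧ Continuous g ∧ Continuous z ∧ Continuous z' ∧
      (∀ x, z x = v x - K * (∫ r in (0:ℝ)..x, (x - r) * v r) - K * t) ∧
      (∀ x, z' x = g x - K * ∫ r in (0:ℝ)..x, v r) ∧
      (∀ x ∈ Icc 0 D, u x = v x) ∧ (∀ x ∈ Icc 0 D, w x = z x) ∧
      (∀ x ∈ Ioo 0 D, deriv u x = g x) ∧ (∀ x ∈ Ioo 0 D, deriv w x = z' x) := by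
  let v := IccExtend hD.le ((Icc 0 D).domRestrict u)
  let g := IccExtend hD.le ((Icc 0 D).domRestrict (derivWithin u (Icc 0 D)))
  have hv : Continuous v := hu.continuousOn.domRestrict.Icc_extend'
  have hg : Continuous g :=
    (hu.continuousOn_derivWithin (uniqueDiffOn_Icc hD) le_rfl).domRestrict.Icc_extend'
  have huv : ∀ x ∈ Icc 0 D, u x = v x := fun x hx => by
    simp [v, IccExtend_of_mem hD.le _ hx]
  have dg : ∀ x ∈ Ioo 0 D, HasDerivAt u (g x) x := fun x hx => by
    have hx' := Ioo_subset_Icc_self hx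
    have e : g x = derivWithin u (Icc 0 D) x := by simp [g, IccExtend_of_mem hD.le _ hx']
    rw [e]
    exact ((hu.differentiableOn one_ne_zero x hx').hasDerivWithinAt).hasDerivAt
      (Icc_mem_nhds hx.1 hx.2)
  have eV : ∀ x, ∫ r in (0:ℝ)..x, (x - r) * v r
      = x * (∫ r in (0:ℝ)..x, v r) - ∫ r in (0:ℝ)..x, r * v r := fun x => by
    rw [← intervalIntegral.integral_const_mul, ← intervalIntegral.integral_sub
      (Continuous.intervalIntegrable (by fun_prop) _ _)
      (Continuous.intervalIntegrable (by fun_prop) _ _)]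
    exact intervalIntegral.integral_congr fun r _ => by ring
  have dU : ∀ x, HasDerivAt (fun y => ∫ r in (0:ℝ)..y, v r) (v x) x := fun x =>
    hv.integral_hasStrictDerivAt 0 x |>.hasDerivAt
  have dU2 : ∀ x, HasDerivAt (fun y => ∫ r in (0:ℝ)..y, r * v r) (x * v x) x := fun x =>
    (continuous_id.mul hv).integral_hasStrictDerivAt 0 x |>.hasDerivAt
  have dV : ∀ x, HasDerivAt (fun y => ∫ r in (0:ℝ)..y, (y - r) * v r)
      (∫ r in (0:ℝ)..x, v r) x := fun x => by
    rw [funext eV]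
    have := ((hasDerivAt_id x).mul (dU x)).sub (dU2 x)
    refine HasDerivAt.congr_deriv this ?_
    simp
  have cV : Continuous (fun y => ∫ r in (0:ℝ)..y, (y - r) * v r) :=
    continuous_iff_continuousAt.2 fun x => (dV x).continuousAt
  have cU : Continuous (fun y => ∫ r in (0:ℝ)..y, v r) :=
    continuous_iff_continuousAt.2 fun x => (dU x).continuousAt
  have wz : ∀ x ∈ Icc 0 D, w x = u x - K * (∫ r in (0:ℝ)..x, (x - r) * v r) - K * t := by
    intro x hx
    rw [hw x, intervalIntegral.integral_congr (g := fun r => (x - r) * v r)]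
    intro r hr
    rw [uIcc_of_le hx.1] at hr
    simp only [huv r ⟨hr.1, hr.2.trans hx.2⟩]
  refine ⟨v, g, fun x => v x - K * (∫ r in (0:ℝ)..x, (x - r) * v r) - K * t,
    fun x => g x - K * ∫ r in (0:ℝ)..x, v r, hv, hg, by fun_prop, by fun_prop,
    fun _ => rfl, fun _ => rfl, huv, ?_, fun x hx => (dg x hx).deriv, ?_⟩
  · intro x hx
    rw [wz x hx, huv x hx]
  · intro x hx
    have := ((dg x hx).sub ((dV x).const_mul K)).sub_const (K * t)
    refine (this.congr_of_eventuallyEq ?_).deriv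
    filter_upwards [Icc_mem_nhds hx.1 hx.2] with y hy
    exact wz y hy

lemma aux_bounds (D Kbar : ℝ) (hD : 0 < D) :
    ∃ C > (0:ℝ), ∀ (ϑ : ℝ) (u : ℝ → ℝ), ContDiffOn ℝ 1 u (Icc 0 D) →
        ∀ w : ℝ → ℝ,
          (∀ x, w x = u x - Kbar * (∫ r in (0:ℝ)..x, (x - r) * u r) - Kbar * ϑ) →
          (ϑ ^ 2 + (∫ x in (0:ℝ)..D, (u x) ^ 2)
                + (∫ x in (0:ℝ)..D, (deriv u x) ^ 2) + (u D) ^ 2)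
              ≤ C * (ϑ ^ 2 + (∫ x in (0:ℝ)..D, (w x) ^ 2)
                + (∫ x in (0:ℝ)..D, (deriv w x) ^ 2) + (w D) ^ 2)
          ∧ (ϑ ^ 2 + (∫ x in (0:ℝ)..D, (w x) ^ 2)
                + (∫ x in (0:ℝ)..D, (deriv w x) ^ 2) + (w D) ^ 2)
              ≤ C * (ϑ ^ 2 + (∫ x in (0:ℝ)..D, (u x) ^ 2)
                + (∫ x in (0:ℝ)..D, (deriv u x) ^ 2) + (u D) ^ 2) := by
  obtain ⟨k, hk⟩ : ∃ k, k = Kbar ^ 2 := ⟨_, rfl⟩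
  have hk0 : 0 ≤ k := hk ▸ sq_nonneg _
  obtain ⟨e, he⟩ : ∃ e, e = exp (3 * Kbar ^ 2 * D ^ 3 * D) := ⟨_, rfl⟩
  have he0 : 0 ≤ e := he ▸ (exp_pos _).le
  -- bound for N, and coefficient of N
  obtain ⟨A, hA⟩ : ∃ A, A = e * (3 + D * (3 * k)) := ⟨_, rfl⟩
  obtain ⟨B, hB⟩ : ∃ B, B = 3 + 3 * D * k * D ^ 3 + 2 * D * k * D + 3 * k * D ^ 3 := ⟨_, rfl⟩
  have hA0 : 0 ≤ A := by rw [hA]; positivity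
  have hB0 : 0 ≤ B := by rw [hB]; positivity
  obtain ⟨F, hF⟩ : ∃ F, F = 4 + 3 * D * k + 3 * k := ⟨_, rfl⟩
  have hF0 : 4 ≤ F := by
    have : 0 ≤ 3 * D * k + 3 * k := by positivity
    linarith
  refine ⟨F + B + B * A, by positivity, fun t u hu w hw => ?_⟩
  obtain ⟨v, g, z, z', hv, hg, hz, hz', ez, ez', uv, wz, dug, dwz⟩ :=
    aux_red D Kbar hD t u w hu hw
  have := aux_core D Kbar hD t v g z z' hv hg hz hz' ez ez'
  rw [← aux_congr D hD u v (fun x hx => uv x (Ioo_subset_Icc_self hx)),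
    ← aux_congr D hD w z (fun x hx => wz x (Ioo_subset_Icc_self hx)),
    ← aux_congr D hD _ g dug, ← aux_congr D hD _ z' dwz,
    ← uv D (right_mem_Icc.2 hD.le), ← wz D (right_mem_Icc.2 hD.le), ← he, ← hk] at this
  have nn : ∀ p : ℝ → ℝ, 0 ≤ ∫ x in (0:ℝ)..D, (p x) ^ 2 := fun p =>
    intervalIntegral.integral_nonneg hD.le fun r _ => sq_nonneg _
  have n1 := nn u
  have n2 := nn w
  have n3 := nn (deriv u)
  have n4 := nn (deriv w)
  have n5 := sq_nonneg (u D)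
  have n6 := sq_nonneg (w D)
  have n7 := sq_nonneg t
  generalize (∫ x in (0:ℝ)..D, (u x) ^ 2) = N at *
  generalize (∫ x in (0:ℝ)..D, (w x) ^ 2) = W at *
  generalize (∫ x in (0:ℝ)..D, (deriv u x) ^ 2) = M at *
  generalize (∫ x in (0:ℝ)..D, (deriv w x) ^ 2) = M' at *
  generalize (u D) ^ 2 = R at *
  generalize (w D) ^ 2 = S at *
  generalize t ^ 2 = P at *
  obtain ⟨h1, h2, h3, h4, h5, h6⟩ := this
  have kd : 0 ≤ D * k := by positivity
  constructor
  · have a1 : N ≤ A * (P + W) := by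
      have : 0 ≤ e * (3 * P + D * (3 * k) * W) := by positivity
      rw [hA]; linarith
    have a2 : N ≤ A * (P + W + M' + S) :=
      a1.trans (mul_le_mul_of_nonneg_left (by linarith) hA0)
    have a3 := mul_le_mul_of_nonneg_left a2 hB0
    have a4 : 0 ≤ B * (P + W + M' + S) := by positivity
    have a5 : P + N + M + R ≤ F * P + 4 * (W + M' + S) + B * N := by
      have : 0 ≤ D * k * P := by positivity
      have : 0 ≤ D * k * D ^ 3 * N := by positivity
      rw [hF, hB]; linarith
    have a6 := mul_le_mul_of_nonneg_right hF0 (show 0 ≤ W + M' + S by positivity)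
    linarith
  · have a5 : P + W + M' + S ≤ F * P + 4 * (M + R) + B * N := by
      rw [hF, hB]; linarith
    have a6 := mul_le_mul_of_nonneg_right hF0 (show 0 ≤ N + M + R by positivity)
    have a7 : 0 ≤ B * (P + M + R) := by positivity
    have a8 : 0 ≤ B * A * (P + N + M + R) := by positivity
    linarith




/-- Equivalence of the Lyapunov functional `Υ` in the backstepping-transformed
variables with the H¹-type functional `Ψ` in the original variables. -/
theorem lyapunov_functional_equivalence
    (D Kbar a b d : ℝ) (hD : 0 < D) (ha : 0 < a) (hb : 0 < b) (hd : 0 < d) :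
    ∃ ρ > (0:ℝ), ∃ ρbar > (0:ℝ),
      ∀ (ϑ : ℝ) (u : ℝ → ℝ), ContDiffOn ℝ 1 u (Icc 0 D) →
        ∀ w : ℝ → ℝ,
          (∀ x, w x = u x - Kbar * (∫ r in (0:ℝ)..x, (x - r) * u r) - Kbar * ϑ) →
          ρ * (ϑ ^ 2 + (∫ x in (0:ℝ)..D, (u x) ^ 2)
                + (∫ x in (0:ℝ)..D, (deriv u x) ^ 2) + (u D) ^ 2)
              ≤ ϑ ^ 2 / 2 + a / 2 * (∫ x in (0:ℝ)..D, (w x) ^ 2)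
                + b / 2 * (∫ x in (0:ℝ)..D, (deriv w x) ^ 2) + d / 2 * (w D) ^ 2
          ∧ ϑ ^ 2 / 2 + a / 2 * (∫ x in (0:ℝ)..D, (w x) ^ 2)
                + b / 2 * (∫ x in (0:ℝ)..D, (deriv w x) ^ 2) + d / 2 * (w D) ^ 2
              ≤ ρbar * (ϑ ^ 2 + (∫ x in (0:ℝ)..D, (u x) ^ 2)
                + (∫ x in (0:ℝ)..D, (deriv u x) ^ 2) + (u D) ^ 2) := by

  obtain ⟨C, hC, H⟩ := aux_bounds D Kbar hD
  obtain ⟨m, hm, m1, m2, m3, m4⟩ : ∃ m > (0:ℝ), m ≤ 1 / 2 ∧ m ≤ a / 2 ∧ m ≤ b / 2 ∧ m ≤ d / 2 :=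
    ⟨min (min (1 / 2) (a / 2)) (min (b / 2) (d / 2)), by positivity,
      (min_le_left _ _).trans (min_le_left _ _), (min_le_left _ _).trans (min_le_right _ _),
      (min_le_right _ _).trans (min_le_left _ _), (min_le_right _ _).trans (min_le_right _ _)⟩
  refine ⟨m / C, by positivity, (1 + a + b + d) * C, by positivity, fun t u hu w hw => ?_⟩
  obtain ⟨h1, h2⟩ := H t u hu w hw
  have nn : ∀ p : ℝ → ℝ, 0 ≤ ∫ x in (0:ℝ)..D, (p x) ^ 2 := fun p =>
    intervalIntegral.integral_nonneg hD.le fun r _ => sq_nonneg _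
  have n2 := nn w
  have n4 := nn (deriv w)
  have n6 := sq_nonneg (w D)
  have n7 := sq_nonneg t
  generalize (∫ x in (0:ℝ)..D, (w x) ^ 2) = W at *
  generalize (∫ x in (0:ℝ)..D, (deriv w x) ^ 2) = M' at *
  generalize (w D) ^ 2 = S at *
  constructor
  · refine (mul_le_mul_of_nonneg_left h1 (by positivity)).trans ?_
    rw [← mul_assoc, div_mul_cancel₀ _ hC.ne']
    linarith [mul_le_mul_of_nonneg_right m1 n7, mul_le_mul_of_nonneg_right m2 n2,
      mul_le_mul_of_nonneg_right m3 n4, mul_le_mul_of_nonneg_right m4 n6]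
  · rw [mul_assoc]
    refine le_trans ?_ (mul_le_mul_of_nonneg_left h2 (by positivity))
    have q1 : 0 ≤ a * (t ^ 2 + W / 2 + M' + S) := by positivity
    have q2 : 0 ≤ b * (t ^ 2 + W + M' / 2 + S) := by positivity
    have q3 : 0 ≤ d * (t ^ 2 + W + M' + S / 2) := by positivity
    linarith
end

section
/- Let a ≠ 0, ω > 0, and y*, H, ϑ ∈ ℝ. Then (ω/(2π)) ∫₀^{2π/ω} (−8/a²)·cos(2ωt) · ( y* + (H/2)(ϑ + a sin(ωt))² ) dt = H. -/
open Real

/-- Average of the Hessian estimate `Ĥ(t) = −(8/a²) cos(2ωt) · y(t)` over one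
period recovers the Hessian `H`. -/
theorem hessian_estimate_average
    (a ω ystar H ϑ : ℝ) (ha : a ≠ 0) (hω : 0 < ω) :
    (ω / (2 * π)) * ∫ t in (0:ℝ)..(2 * π / ω),
        (-8 / a ^ 2) * Real.cos (2 * ω * t)
          * (ystar + H / 2 * (ϑ + a * Real.sin (ω * t)) ^ 2)
      = H := by
  have hω' : ω ≠ 0 := hω.ne'
  have hpi : π ≠ 0 := Real.pi_ne_zero
  have key : ∀ t : ℝ, HasDerivAt (fun t : ℝ => (-8 / a ^ 2) *
      ((ystar + H / 2 * ϑ ^ 2) * (sin (ω * t) * cos (ω * t) / ω)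
       + H * ϑ * a * ((cos (ω * t) - 2 / 3 * cos (ω * t) ^ 3) / ω)
       + H / 2 * a ^ 2 * ((sin (ω * t) * cos (ω * t) / 2
          - sin (ω * t) * cos (ω * t) * (2 * cos (ω * t) ^ 2 - 1) / 4) / ω - t / 4)))
      ((-8 / a ^ 2) * Real.cos (2 * ω * t)
          * (ystar + H / 2 * (ϑ + a * Real.sin (ω * t)) ^ 2)) t := by
    intro t
    have hl : HasDerivAt (fun t : ℝ => ω * t) ω t := by
      simpa using (hasDerivAt_id t).const_mul ω
    have hs : HasDerivAt (fun t : ℝ => sin (ω * t)) (cos (ω * t) * ω) t := hl.sin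
    have hc : HasDerivAt (fun t : ℝ => cos (ω * t)) (-sin (ω * t) * ω) t := hl.cos
    have hsc := hs.mul hc
    have h1 := (hsc.div_const ω).const_mul (ystar + H / 2 * ϑ ^ 2)
    have h2 := ((hc.sub ((hc.pow 3).const_mul (2 / 3))).div_const ω).const_mul (H * ϑ * a)
    have h3 := ((((hsc.div_const 2).sub
      ((hsc.mul (((hc.pow 2).const_mul 2).sub_const 1)).div_const 4)).div_const ω).sub
      ((hasDerivAt_id t).div_const 4)).const_mul (H / 2 * a ^ 2)
    have h := ((h1.add h2).add h3).const_mul (-8 / a ^ 2)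
    refine h.congr_deriv ?_
    have e : cos (2 * ω * t) = 2 * cos (ω * t) ^ 2 - 1 := by
      rw [mul_assoc, cos_two_mul]
    rw [e]
    have p := sin_sq_add_cos_sq (ω * t)
    simp only [Pi.mul_apply, Pi.pow_apply]
    generalize sin (ω * t) = s at *
    generalize cos (ω * t) = c at *
    have p' : s ^ 2 = 1 - c ^ 2 := by linarith
    rw [mul_assoc (-8 / a ^ 2)]
    congr 1
    field_simp
    ring_nf
    have p4 : s ^ 4 = (1 - c ^ 2) ^ 2 := by rw [← p']; ring
    have p3 : s ^ 3 = s * (1 - c ^ 2) := by rw [← p']; ring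
    simp only [p', p3, p4]
    ring
  rw [intervalIntegral.integral_eq_sub_of_hasDerivAt (fun t _ => key t)
    (Continuous.intervalIntegrable (by fun_prop) _ _)]
  have e : ω * (2 * π / ω) = 2 * π := by field_simp
  simp only [e, sin_two_pi, cos_two_pi, mul_zero, sin_zero, cos_zero]
  field_simp
  ring
end

section
/- Let a ≠ 0, ω > 0, and y*, H, ϑ, g ∈ ℝ. Then (ω/(2π)) ∫₀^{2π/ω} ( y* + (H/2)(ϑ + a sin(ωt))² ) · ( (2/a) sin(ωt) − (8/a²) cos(2ωt)·g ) dt = H·ϑ + H·g. -/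
open Real

lemma aux_int (c0 c1 c2 c3 c4 : ℝ) :
    ∫ x in (0:ℝ)..(2 * π), (c0 + c1 * sin x + c2 * sin x ^ 2 + c3 * sin x ^ 3 + c4 * sin x ^ 4)
      = 2 * π * (c0 + c2 / 2 + 3 * c4 / 8) := by
  have hd : ∀ x ∈ Set.uIcc (0:ℝ) (2 * π), HasDerivAt (fun x : ℝ => c0 * x + c1 * (-cos x)
      + c2 * ((x - sin x * cos x) / 2) + c3 * (-cos x + cos x ^ 3 / 3)
      + c4 * (3 * x / 8 - 3 * (sin x * cos x) / 8 - sin x ^ 3 * cos x / 4))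
      (c0 + c1 * sin x + c2 * sin x ^ 2 + c3 * sin x ^ 3 + c4 * sin x ^ 4) x := by
    intro x _
    have hs := hasDerivAt_sin x
    have hc := hasDerivAt_cos x
    have hi := hasDerivAt_id' x
    have hsc := hs.mul hc
    have h := ((((hi.const_mul c0).add (hc.neg.const_mul c1)).add
      (((hi.sub hsc).div_const 2).const_mul c2)).add
      ((hc.neg.add ((hc.pow 3).div_const 3)).const_mul c3)).add
      (((((hi.const_mul 3).div_const 8).sub ((hsc.const_mul 3).div_const 8)).sub
        (((hs.pow 3).mul hc).div_const 4)).const_mul c4)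
    refine h.congr_deriv ?_
    have e : cos x ^ 2 = 1 - sin x ^ 2 := by rw [← sin_sq_add_cos_sq x]; ring
    simp only [Pi.pow_apply]
    push_cast
    norm_num
    linear_combination (-c2 / 2 - c3 * sin x - 3 * c4 / 8 - 3 * c4 * sin x ^ 2 / 4) * e
  rw [intervalIntegral.integral_eq_sub_of_hasDerivAt hd
    (Continuous.intervalIntegrable (by fun_prop) _ _)]
  simp
  ring

/-- Average over one period of the demodulated control bracket yields
`H·ϑ + H·g`. -/
theorem control_bracket_average
    (a ω ystar H ϑ g : ℝ) (ha : a ≠ 0) (hω : 0 < ω) :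
    (ω / (2 * π)) * ∫ t in (0:ℝ)..(2 * π / ω),
        (ystar + H / 2 * (ϑ + a * Real.sin (ω * t)) ^ 2)
          * ((2 / a) * Real.sin (ω * t) - (8 / a ^ 2) * Real.cos (2 * ω * t) * g)
      = H * ϑ + H * g := by
  have hp := Real.pi_ne_zero
  have hw := hω.ne'
  set Y := ystar + H / 2 * ϑ ^ 2 with hY
  set k := 8 * g / a ^ 2 with hk
  let f : ℝ → ℝ := fun x => (-(k * Y)) + (2 / a * Y - k * (H * ϑ * a)) * sin x
    + (2 * H * ϑ - k * (H / 2 * a ^ 2) + 2 * k * Y) * sin x ^ 2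
    + (H * a + 2 * k * (H * ϑ * a)) * sin x ^ 3 + (k * H * a ^ 2) * sin x ^ 4
  have h1 : ∀ t : ℝ, (ystar + H / 2 * (ϑ + a * Real.sin (ω * t)) ^ 2)
          * ((2 / a) * Real.sin (ω * t) - (8 / a ^ 2) * Real.cos (2 * ω * t) * g)
      = f (ω * t) := by
    intro t
    have e : cos (2 * ω * t) = 1 - 2 * sin (ω * t) ^ 2 := by
      rw [mul_assoc, cos_two_mul, cos_sq']; ring
    rw [e]
    simp only [f, hY, hk]
    field_simp
    ring
  simp_rw [h1]
  rw [intervalIntegral.integral_comp_mul_left f hw, mul_zero, mul_div_cancel₀ _ hw]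
  simp only [f]
  rw [aux_int, hk, smul_eq_mul]
  field_simp
  ring
end

section
/- Let a ∈ ℝ, ω > 0, D > 0, set r = √(ω/2), and define β : ℝ × ℝ → ℝ by β(x,t) = a·( cosh(rx)·cos(rx)·sin(ωt) + sinh(rx)·sin(rx)·cos(ωt) ). Then β satisfies the heat equation ∂ₜβ(x,t) = ∂ₓₓβ(x,t) for all x, t, with Neumann condition ∂ₓβ(0,t) = 0 and β(0,t) = a·sin(ωt). Moreover, the propagated perturbation signal S(t) := β(D,t) satisfies |S(t)| ≤ 2|a|·e^{D√(ω/2)} for all t. -/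
open Real

/-- Trajectory generation for the diffusion PDE: with `r = √(ω/2)`,
`β(x,t) = a(cosh(rx)cos(rx)sin(ωt) + sinh(rx)sin(rx)cos(ωt))` solves the heat
equation with Neumann condition at `x = 0` and trace `a sin(ωt)`, and the
propagated perturbation signal `S(t) = β(D,t)` is bounded by
`2|a|e^{D√(ω/2)}`. -/
theorem diffusion_trajectory_generation
    (a ω D : ℝ) (hω : 0 < ω) (hD : 0 < D) (β : ℝ → ℝ → ℝ)
    (hβ : ∀ x t, β x t = a *
      (Real.cosh (Real.sqrt (ω / 2) * x) * Real.cos (Real.sqrt (ω / 2) * x)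
          * Real.sin (ω * t)
        + Real.sinh (Real.sqrt (ω / 2) * x) * Real.sin (Real.sqrt (ω / 2) * x)
          * Real.cos (ω * t))) :
    (∀ x t : ℝ, deriv (fun τ => β x τ) t = deriv (deriv (fun y => β y t)) x)
    ∧ (∀ t : ℝ, deriv (fun y => β y t) 0 = 0)
    ∧ (∀ t : ℝ, β 0 t = a * Real.sin (ω * t))
    ∧ (∀ t : ℝ, |β D t| ≤ 2 * |a| * Real.exp (D * Real.sqrt (ω / 2))) := by
  have hr : Real.sqrt (ω / 2) * Real.sqrt (ω / 2) = ω / 2 :=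
    Real.mul_self_sqrt (by positivity)
  have hr0 : 0 ≤ Real.sqrt (ω / 2) := Real.sqrt_nonneg _
  generalize Real.sqrt (ω / 2) = r at *
  have hl : ∀ (c y : ℝ), HasDerivAt (fun y : ℝ => c * y) c y := fun c y => by
    simpa using (hasDerivAt_id y).const_mul c
  have hch : ∀ y, HasDerivAt (fun y : ℝ => Real.cosh (r * y)) (Real.sinh (r * y) * r) y :=
    fun y => (hl r y).cosh
  have hsh : ∀ y, HasDerivAt (fun y : ℝ => Real.sinh (r * y)) (Real.cosh (r * y) * r) y :=
    fun y => (hl r y).sinh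
  have hco : ∀ c y, HasDerivAt (fun y : ℝ => Real.cos (c * y)) (-Real.sin (c * y) * c) y :=
    fun c y => (hl c y).cos
  have hsi : ∀ c y, HasDerivAt (fun y : ℝ => Real.sin (c * y)) (Real.cos (c * y) * c) y :=
    fun c y => (hl c y).sin
  have hx : ∀ t, deriv (fun y => β y t) = fun y => a * (r *
      ((Real.sinh (r * y) * Real.cos (r * y) - Real.cosh (r * y) * Real.sin (r * y))
        * Real.sin (ω * t)
      + (Real.cosh (r * y) * Real.sin (r * y) + Real.sinh (r * y) * Real.cos (r * y))
        * Real.cos (ω * t))) := by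
    intro t
    funext y
    simp only [hβ]
    have h := (((((hch y).mul (hco r y)).mul_const (Real.sin (ω * t))).add
      (((hsh y).mul (hsi r y)).mul_const (Real.cos (ω * t)))).const_mul a)
    refine (HasDerivAt.deriv h).trans ?_
    ring
  refine ⟨?_, ?_, ?_, ?_⟩
  · intro x t
    rw [hx]
    simp only [hβ]
    have h1 := (((hsi ω t).const_mul (Real.cosh (r * x) * Real.cos (r * x))).add
      ((hco ω t).const_mul (Real.sinh (r * x) * Real.sin (r * x)))).const_mul a
    have h2 := (((((((hsh x).mul (hco r x)).sub ((hch x).mul (hsi r x))).mul_const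
      (Real.sin (ω * t))).add
      ((((hch x).mul (hsi r x)).add ((hsh x).mul (hco r x))).mul_const
      (Real.cos (ω * t)))).const_mul r).const_mul a)
    refine (HasDerivAt.deriv h1).trans (Eq.trans ?_ (HasDerivAt.deriv h2).symm)
    have hw : ω = 2 * (r * r) := by linarith
    generalize Real.sin (ω * t) = S
    generalize Real.cos (ω * t) = C
    rw [hw]
    ring
  · intro t
    rw [hx]
    simp
  · intro t
    simp [hβ]
  · intro t
    have hy : 0 ≤ r * D := by positivity
    have e1 : Real.exp (-(r * D)) ≤ Real.exp (r * D) := Real.exp_le_exp.2 (by linarith)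
    have e0 := Real.exp_pos (-(r * D))
    have b1 : |Real.cosh (r * D)| ≤ Real.exp (r * D) := by
      rw [Real.cosh_eq, abs_le]; constructor <;> linarith
    have b2 : |Real.sinh (r * D)| ≤ Real.exp (r * D) := by
      rw [Real.sinh_eq, abs_le]; constructor <;> linarith
    have key : ∀ p q s : ℝ, |p| ≤ Real.exp (r * D) → |q| ≤ 1 → |s| ≤ 1 →
        |p * q * s| ≤ Real.exp (r * D) := by
      intro p q s hp hq hs
      rw [abs_mul, abs_mul]
      calc |p| * |q| * |s| ≤ Real.exp (r * D) * 1 * 1 := by gcongr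
        _ = _ := by ring
    rw [hβ, abs_mul, mul_comm D r]
    have h1 := key _ _ _ b1 (Real.abs_cos_le_one (r * D)) (Real.abs_sin_le_one (ω * t))
    have h2 := key _ _ _ b2 (Real.abs_sin_le_one (r * D)) (Real.abs_cos_le_one (ω * t))
    calc _ ≤ |a| * (Real.exp (r * D) + Real.exp (r * D)) := by
          gcongr
          exact (abs_add_le _ _).trans (add_le_add h1 h2)
      _ = _ := by ring
end
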